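/- Let h : ℝ² → ℝ be continuous and define H(x,u) := ∫₀^u h(x,v) dv. Let u be a classical solution of the semilinear equation u_t = u_xx + h(x, u) on (0,T) × [0,1] (u, u_t, u_x, u_xx, u_tx continuous and bounded) with boundary condition u_x(t,ι)·u_t(t,ι) = 0 for ι ∈ {0,1} and all t ∈ (0,T). Then for each t ∈ (0,T), the energy E(t) := ∫₀¹ ( ½·u_x(t,x)² − H(x, u(t,x)) ) dx is differentiable with E′(t) = −∫₀¹ u_t(t,x)² dx. -/

import Mathlib

/-!
Differentiating the energy under the integral sign gives
`E'(t) = ∫₀¹ (u_x u_tx - h(x,u) u_t) dx`, and by the equation `h(x,u) = u_t - u_xx`, so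
`E'(t) = ∫₀¹ (u_x u_tx + u_xx u_t) dx - ∫₀¹ u_t² dx`. The first integrand is `∂ₓ(u_x u_t)`,
whose integral is a boundary term killed by the boundary condition.

The hypotheses only give `u_tx` as `∂ₜ(u_x)`, so the equality of mixed partials has to be proved:
`hasDerivAt_mixed` obtains `∂ₓ(u_t) = u_tx` by differentiating
`u(t,x) - u(t,0) = ∫₀ˣ u_x(t,y) dy` in `t`. Both differentiations under the integral are
instances of `hasDerivAt_integral_strip`.
-/

open Set MeasureTheory

lemma continuousOn_slice {T : ℝ} {F : ℝ → ℝ → ℝ}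
    (hF : ContinuousOn (fun q : ℝ × ℝ => F q.1 q.2) (Ioo (0:ℝ) T ×ˢ Icc (0:ℝ) 1))
    {t : ℝ} (ht : t ∈ Ioo (0:ℝ) T) : ContinuousOn (F t) (Icc (0:ℝ) 1) :=
  hF.comp (f := fun x : ℝ => (t, x)) (by fun_prop) fun _ hx => ⟨ht, hx⟩

lemma intervalIntegrable_slice {T : ℝ} {F : ℝ → ℝ → ℝ}
    (hF : ContinuousOn (fun q : ℝ × ℝ => F q.1 q.2) (Ioo (0:ℝ) T ×ˢ Icc (0:ℝ) 1))
    {t : ℝ} (ht : t ∈ Ioo (0:ℝ) T) {b : ℝ} (hb : b ∈ Icc (0:ℝ) 1) :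
    IntervalIntegrable (F t) volume 0 b := by
  apply ContinuousOn.intervalIntegrable
  rw [uIcc_of_le hb.1]
  exact (continuousOn_slice hF ht).mono (Icc_subset_Icc_right hb.2)

/-- Differentiation under the integral sign on the strip `(0,T) × [0,1]`, with the constant `K`
as dominating function. -/
lemma hasDerivAt_integral_strip {T K : ℝ} {F F' : ℝ → ℝ → ℝ}
    (hF : ContinuousOn (fun q : ℝ × ℝ => F q.1 q.2) (Ioo (0:ℝ) T ×ˢ Icc (0:ℝ) 1))
    (hF' : ContinuousOn (fun q : ℝ × ℝ => F' q.1 q.2) (Ioo (0:ℝ) T ×ˢ Icc (0:ℝ) 1))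
    (hK : ∀ t ∈ Ioo (0:ℝ) T, ∀ x ∈ Icc (0:ℝ) 1, |F' t x| ≤ K)
    (hd : ∀ t ∈ Ioo (0:ℝ) T, ∀ x ∈ Icc (0:ℝ) 1, HasDerivAt (fun s => F s x) (F' t x) t)
    {t : ℝ} (ht : t ∈ Ioo (0:ℝ) T) {b : ℝ} (hb : b ∈ Icc (0:ℝ) 1) :
    HasDerivAt (fun s => ∫ x in (0:ℝ)..b, F s x) (∫ x in (0:ℝ)..b, F' t x) t := by
  have hnhds : Ioo (0:ℝ) T ∈ nhds t := isOpen_Ioo.mem_nhds ht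
  have hmem : ∀ x, x ∈ uIoc (0:ℝ) b → x ∈ Icc (0:ℝ) 1 := by
    intro x hx
    rw [uIoc_of_le hb.1] at hx
    exact ⟨hx.1.le, hx.2.trans hb.2⟩
  refine (intervalIntegral.hasDerivAt_integral_of_dominated_loc_of_deriv_le
    (F := F) (F' := F') (bound := fun _ => K) hnhds ?_ ?_ ?_ ?_ ?_ ?_).2
  · filter_upwards [hnhds] with s hs
    exact (intervalIntegrable_slice hF hs hb).def'.aestronglyMeasurable
  · exact intervalIntegrable_slice hF ht hb
  · exact (intervalIntegrable_slice hF' ht hb).def'.aestronglyMeasurable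
  · exact Filter.Eventually.of_forall fun x hx s hs => hK s hs x (hmem x hx)
  · exact intervalIntegrable_const
  · exact Filter.Eventually.of_forall fun x hx s hs => hd s hs x (hmem x hx)

/-- Equality of mixed partials: if `utx = ∂ₜ(∂ₓ u)` is continuous and bounded on the strip, then
`∂ₓ(∂ₜ u) = utx` at interior points. -/
lemma hasDerivAt_mixed {T C : ℝ} {u ut ux utx : ℝ → ℝ → ℝ}
    (hut : ∀ t ∈ Ioo (0:ℝ) T, ∀ x ∈ Icc (0:ℝ) 1, HasDerivAt (fun s => u s x) (ut t x) t)
    (hux : ∀ t ∈ Ioo (0:ℝ) T, ∀ x ∈ Icc (0:ℝ) 1,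
      HasDerivWithinAt (fun y => u t y) (ux t x) (Icc (0:ℝ) 1) x)
    (hutx : ∀ t ∈ Ioo (0:ℝ) T, ∀ x ∈ Icc (0:ℝ) 1, HasDerivAt (fun s => ux s x) (utx t x) t)
    (huxcont : ContinuousOn (fun q : ℝ × ℝ => ux q.1 q.2) (Ioo (0:ℝ) T ×ˢ Icc (0:ℝ) 1))
    (hutxcont : ContinuousOn (fun q : ℝ × ℝ => utx q.1 q.2) (Ioo (0:ℝ) T ×ˢ Icc (0:ℝ) 1))
    (hC : ∀ t ∈ Ioo (0:ℝ) T, ∀ x ∈ Icc (0:ℝ) 1, |utx t x| ≤ C)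
    {t : ℝ} (ht : t ∈ Ioo (0:ℝ) T) {x : ℝ} (hx : x ∈ Ioo (0:ℝ) 1) :
    HasDerivAt (ut t) (utx t x) x := by
  have h0 : (0:ℝ) ∈ Icc (0:ℝ) 1 := ⟨le_rfl, zero_le_one⟩
  have hftc : ∀ s ∈ Ioo (0:ℝ) T, ∀ b ∈ Icc (0:ℝ) 1,
      ∫ y in (0:ℝ)..b, ux s y = u s b - u s 0 := by
    intro s hs b hb
    refine intervalIntegral.integral_eq_sub_of_hasDerivAt_of_le hb.1
      (fun y hy => ((hux s hs y ⟨hy.1, hy.2.trans hb.2⟩).continuousWithinAt).mono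
        (Icc_subset_Icc_right hb.2)) (fun y hy => ?_) (intervalIntegrable_slice huxcont hs hb)
    have hy1 : y < 1 := hy.2.trans_le hb.2
    exact (hux s hs y ⟨hy.1.le, hy1.le⟩).hasDerivAt (Icc_mem_nhds hy.1 hy1)
  have hrep : ∀ b ∈ Icc (0:ℝ) 1, ut t b = ut t 0 + ∫ y in (0:ℝ)..b, utx t y := by
    intro b hb
    have h1 := hasDerivAt_integral_strip huxcont hutxcont hC hutx ht hb
    have h2 := (hut t ht b hb).sub (hut t ht 0 h0)
    have h3 : HasDerivAt (fun s => ∫ y in (0:ℝ)..b, ux s y) (ut t b - ut t 0) t := by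
      refine h2.congr_of_eventuallyEq ?_
      filter_upwards [isOpen_Ioo.mem_nhds ht] with s hs
      exact hftc s hs b hb
    linarith [h1.unique h3]
  have hcont := continuousOn_slice hutxcont ht
  have hmeas : StronglyMeasurableAtFilter (utx t) (nhds x) :=
    (hcont.mono Ioo_subset_Icc_self).stronglyMeasurableAtFilter isOpen_Ioo x hx
  have hd := (intervalIntegral.integral_hasDerivAt_right
    (intervalIntegrable_slice hutxcont ht (Ioo_subset_Icc_self hx)) hmeas
    (hcont.continuousAt (Icc_mem_nhds hx.1 hx.2))).const_add (ut t 0)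
  refine hd.congr_of_eventuallyEq ?_
  filter_upwards [Icc_mem_nhds hx.1 hx.2] with b hb
  exact hrep b hb

/-- Semilinear case. Let `h : ℝ² → ℝ` be continuous,
`H(x,u) := ∫₀^u h(x,v) dv`, and let `u` be a classical solution of `u_t = u_xx + h(x,u)`
on `(0,T) × [0,1]` with boundary condition `u_x(t,ι)·u_t(t,ι) = 0` at `ι ∈ {0,1}`. Then
for each `t ∈ (0,T)` the energy `E(t) = ∫₀¹ (½·u_x² - H(x,u)) dx` is differentiable with
`E′(t) = -∫₀¹ u_t² dx`. -/
theorem semilinear_energy_decay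
    (h : ℝ → ℝ → ℝ) (hhc : Continuous ↿h)
    (H : ℝ → ℝ → ℝ)
    (hH : ∀ x v : ℝ, H x v = ∫ w in (0:ℝ)..v, h x w)
    (T : ℝ) (hT : 0 < T)
    (u ut ux uxx utx : ℝ → ℝ → ℝ)
    (hut : ∀ t ∈ Ioo (0:ℝ) T, ∀ x ∈ Icc (0:ℝ) 1,
      HasDerivAt (fun s => u s x) (ut t x) t)
    (hux : ∀ t ∈ Ioo (0:ℝ) T, ∀ x ∈ Icc (0:ℝ) 1,
      HasDerivWithinAt (fun y => u t y) (ux t x) (Icc (0:ℝ) 1) x)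
    (huxx : ∀ t ∈ Ioo (0:ℝ) T, ∀ x ∈ Icc (0:ℝ) 1,
      HasDerivWithinAt (fun y => ux t y) (uxx t x) (Icc (0:ℝ) 1) x)
    (hutx : ∀ t ∈ Ioo (0:ℝ) T, ∀ x ∈ Icc (0:ℝ) 1,
      HasDerivAt (fun s => ux s x) (utx t x) t)
    (hucont : ContinuousOn (fun q : ℝ × ℝ => u q.1 q.2) (Ioo (0:ℝ) T ×ˢ Icc (0:ℝ) 1))
    (hutcont : ContinuousOn (fun q : ℝ × ℝ => ut q.1 q.2) (Ioo (0:ℝ) T ×ˢ Icc (0:ℝ) 1))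
    (huxcont : ContinuousOn (fun q : ℝ × ℝ => ux q.1 q.2) (Ioo (0:ℝ) T ×ˢ Icc (0:ℝ) 1))
    (huxxcont : ContinuousOn (fun q : ℝ × ℝ => uxx q.1 q.2) (Ioo (0:ℝ) T ×ˢ Icc (0:ℝ) 1))
    (hutxcont : ContinuousOn (fun q : ℝ × ℝ => utx q.1 q.2) (Ioo (0:ℝ) T ×ˢ Icc (0:ℝ) 1))
    (hbdd : ∃ C : ℝ, ∀ t ∈ Ioo (0:ℝ) T, ∀ x ∈ Icc (0:ℝ) 1,
      |u t x| ≤ C ∧ |ut t x| ≤ C ∧ |ux t x| ≤ C ∧ |uxx t x| ≤ C ∧ |utx t x| ≤ C)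
    (hPDE : ∀ t ∈ Ioo (0:ℝ) T, ∀ x ∈ Icc (0:ℝ) 1,
      ut t x = uxx t x + h x (u t x))
    (hBC : ∀ t ∈ Ioo (0:ℝ) T,
      ux t 0 * ut t 0 = 0 ∧ ux t 1 * ut t 1 = 0) :
    ∀ t ∈ Ioo (0:ℝ) T,
      HasDerivAt (fun s => ∫ x in (0:ℝ)..1, ((ux s x) ^ 2 / 2 - H x (u s x)))
        (-(∫ x in (0:ℝ)..1, (ut t x) ^ 2)) t := by
  intro t ht
  obtain ⟨C, hC⟩ := hbdd
  have h1 : (1:ℝ) ∈ Icc (0:ℝ) 1 := ⟨zero_le_one, le_rfl⟩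
  have hslice : ∀ x, Continuous (h x) := fun x =>
    hhc.comp (f := fun v : ℝ => (x, v)) (by fun_prop)
  have hHcont : Continuous fun q : ℝ × ℝ => H q.1 q.2 := by
    simp only [hH]
    exact intervalIntegral.continuous_parametric_intervalIntegral_of_continuous
      (f := fun (q : ℝ × ℝ) w => h q.1 w)
      (hhc.comp (f := fun p : (ℝ × ℝ) × ℝ => (p.1.1, p.2)) (by fun_prop)) continuous_snd
  have hHd : ∀ x v, HasDerivAt (H x) (h x v) v := by
    intro x v
    rw [show H x = fun v => ∫ w in (0:ℝ)..v, h x w from funext (hH x)]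
    exact ((hslice x).integral_hasStrictDerivAt 0 v).hasDerivAt
  -- By the equation, `ut - uxx` stands for `h x u`; in this form the bound is immediate.
  have hE := hasDerivAt_integral_strip (T := T) (K := C * C + (C + C) * C)
    (F := fun s x => (ux s x) ^ 2 / 2 - H x (u s x))
    (F' := fun s x => ux s x * utx s x - (ut s x - uxx s x) * ut s x)
    (((huxcont.pow 2).div_const 2).sub
      (hHcont.comp_continuousOn (continuousOn_snd.prodMk hucont)))
    ((huxcont.mul hutxcont).sub ((hutcont.sub huxxcont).mul hutcont))
    (by
      intro s hs x hx
      obtain ⟨-, b1, b2, b3, b4⟩ := hC s hs x hx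
      have hC0 : 0 ≤ C := (abs_nonneg _).trans b1
      refine (abs_sub _ _).trans ?_
      rw [abs_mul, abs_mul]
      have b5 : |ut s x - uxx s x| ≤ C + C := (abs_sub _ _).trans (add_le_add b1 b3)
      gcongr)
    (by
      intro s hs x hx
      have hd1 := ((hutx s hs x hx).pow 2).div_const 2
      have hd2 := (hHd x (u s x)).comp s (hut s hs x hx)
      refine (hd1.sub hd2).congr_deriv ?_
      rw [hPDE s hs x hx]
      push_cast
      ring)
    ht h1
  refine hE.congr_deriv ?_
  have hcux := continuousOn_slice huxcont ht
  have hcut := continuousOn_slice hutcont ht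
  have hcont1 : ContinuousOn (fun x => uxx t x * ut t x + ux t x * utx t x) (uIcc (0:ℝ) 1) := by
    rw [uIcc_of_le zero_le_one]
    exact ((continuousOn_slice huxxcont ht).mul hcut).add
      (hcux.mul (continuousOn_slice hutxcont ht))
  have hcont2 : ContinuousOn (fun x => ut t x ^ 2) (uIcc (0:ℝ) 1) := by
    rw [uIcc_of_le zero_le_one]
    exact hcut.pow 2
  have hflux : ∫ x in (0:ℝ)..1, (uxx t x * ut t x + ux t x * utx t x) = 0 := by
    rw [intervalIntegral.integral_eq_sub_of_hasDerivAt_of_le (f := fun x => ux t x * ut t x)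
      zero_le_one (hcux.mul hcut) (fun x hx => ?_) hcont1.intervalIntegrable]
    · rw [(hBC t ht).1, (hBC t ht).2, sub_zero]
    · exact ((huxx t ht x (Ioo_subset_Icc_self hx)).hasDerivAt (Icc_mem_nhds hx.1 hx.2)).mul
        (hasDerivAt_mixed hut hux hutx huxcont hutxcont
          (fun s hs y hy => (hC s hs y hy).2.2.2.2) ht hx)
  calc ∫ x in (0:ℝ)..1, (ux t x * utx t x - (ut t x - uxx t x) * ut t x)
      = ∫ x in (0:ℝ)..1, ((uxx t x * ut t x + ux t x * utx t x) - ut t x ^ 2) := by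
        congr 1
        ext x
        ring
    _ = -(∫ x in (0:ℝ)..1, (ut t x) ^ 2) := by
        rw [intervalIntegral.integral_sub hcont1.intervalIntegrable hcont2.intervalIntegrable,
          hflux, zero_sub]
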